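/- Let (Ω,P,π) be a finite irreducible Markov chain (reversibility is not assumed). Then for every natural number t, every real 0 < s ≤ √t and every probability measure μ on Ω: d_L(2t + ⌈2s√t⌉, μ) ≤ d_ave(t, μ) + e^{−s²/4}. -/

import Mathlib

open Matrix Filter Asymptotics

/-- `P` is a stochastic matrix. -/
def IsStochastic {Ω : Type*} [Fintype Ω] (P : Matrix Ω Ω ℝ) : Prop :=
  (∀ x y, 0 ≤ P x y) ∧ ∀ x, ∑ y, P x y = 1

/-- `P` is irreducible. -/
def IsIrreducibleMatrix {Ω : Type*} [Fintype Ω] [DecidableEq Ω] (P : Matrix Ω Ω ℝ) : Prop :=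
  ∀ x y, ∃ n : ℕ, 0 < (P ^ n) x y

/-- `μ` is a probability vector. -/
def IsProbVec {Ω : Type*} [Fintype Ω] (μ : Ω → ℝ) : Prop :=
  (∀ x, 0 ≤ μ x) ∧ ∑ x, μ x = 1

/-- The chain `(P, pi)` is reversible. -/
def IsReversible {Ω : Type*} [Fintype Ω] (P : Matrix Ω Ω ℝ) (pi : Ω → ℝ) : Prop :=
  ∀ x y, pi x * P x y = pi y * P y x

/-- A finite irreducible Markov chain `P` with stationary distribution `pi`. -/
def IsMC {Ω : Type*} [Fintype Ω] [DecidableEq Ω] (P : Matrix Ω Ω ℝ) (pi : Ω → ℝ) : Prop :=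
  IsStochastic P ∧ IsIrreducibleMatrix P ∧ IsProbVec pi ∧ pi ᵥ* P = pi

/-- A finite irreducible reversible Markov chain `P` with stationary distribution `pi`. -/
def IsRevMC {Ω : Type*} [Fintype Ω] [DecidableEq Ω] (P : Matrix Ω Ω ℝ) (pi : Ω → ℝ) : Prop :=
  IsMC P pi ∧ IsReversible P pi

/-- Total-variation distance between two measures on a finite set. -/
noncomputable def tvDist {Ω : Type*} [Fintype Ω] (μ ν : Ω → ℝ) : ℝ :=
  (∑ x, |μ x - ν x|) / 2

/-- The lazy version `(I + P)/2` of `P`. -/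
noncomputable def lazyM {Ω : Type*} [Fintype Ω] [DecidableEq Ω] (P : Matrix Ω Ω ℝ) :
    Matrix Ω Ω ℝ :=
  (2 : ℝ)⁻¹ • (1 + P)

/-- `d_c(t, μ)`: TV distance from stationarity of the continuous-time chain at time `t`,
started from `μ`. -/
noncomputable def contDist {Ω : Type*} [Fintype Ω] [DecidableEq Ω] (P : Matrix Ω Ω ℝ) (pi : Ω → ℝ)
    (t : ℝ) (μ : Ω → ℝ) : ℝ :=
  tvDist (fun y => ∑' k : ℕ, Real.exp (-t) * t ^ k / (Nat.factorial k) * (μ ᵥ* (P ^ k)) y) pi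

/-- `d_L(t, μ)`: TV distance from stationarity of the lazy chain at (discrete) time `t`,
started from `μ`. -/
noncomputable def lazyDist {Ω : Type*} [Fintype Ω] [DecidableEq Ω] (P : Matrix Ω Ω ℝ)
    (pi : Ω → ℝ) (t : ℝ) (μ : Ω → ℝ) : ℝ :=
  tvDist (μ ᵥ* (lazyM P ^ ⌊t⌋₊)) pi

/-- `d_ave(t, μ)`: TV distance from stationarity of the averaged chain at (discrete) time `t`,
started from `μ`. -/
noncomputable def aveDist {Ω : Type*} [Fintype Ω] [DecidableEq Ω] (P : Matrix Ω Ω ℝ) (pi : Ω → ℝ)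
    (t : ℝ) (μ : Ω → ℝ) : ℝ :=
  tvDist (fun y => ((μ ᵥ* (P ^ ⌊t⌋₊)) y + (μ ᵥ* (P ^ (⌊t⌋₊ + 1))) y) / 2) pi

/-- The point mass at `x`. -/
noncomputable def deltaMass {Ω : Type*} [DecidableEq Ω] (x : Ω) : Ω → ℝ :=
  fun y => if y = x then 1 else 0

/-- Worst-case continuous-time distance `d_c(t)`. -/
noncomputable def contDistMax {Ω : Type*} [Fintype Ω] [DecidableEq Ω] (P : Matrix Ω Ω ℝ)
    (pi : Ω → ℝ) (t : ℝ) : ℝ :=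
  ⨆ x : Ω, contDist P pi t (deltaMass x)

/-- Worst-case lazy distance `d_L(t)`. -/
noncomputable def lazyDistMax {Ω : Type*} [Fintype Ω] [DecidableEq Ω] (P : Matrix Ω Ω ℝ)
    (pi : Ω → ℝ) (t : ℝ) : ℝ :=
  ⨆ x : Ω, lazyDist P pi t (deltaMass x)

/-- Worst-case averaged distance `d_ave(t)`. -/
noncomputable def aveDistMax {Ω : Type*} [Fintype Ω] [DecidableEq Ω] (P : Matrix Ω Ω ℝ)
    (pi : Ω → ℝ) (t : ℝ) : ℝ :=
  ⨆ x : Ω, aveDist P pi t (deltaMass x)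

/-- `φ_{α,C}(t) = t + ⌈C t^{(1+2α)/2} √(α log t)⌉`. -/
noncomputable def phiAC (α C t : ℝ) : ℝ :=
  t + ((⌈C * t ^ ((1 + 2 * α) / 2) * Real.sqrt (α * Real.log t)⌉ : ℤ) : ℝ)

/-- `ψ_{α,C}(x) = min (1, x + C |log(2x)|^{-α})`. -/
noncomputable def psiAC (α C x : ℝ) : ℝ :=
  min 1 (x + C * |Real.log (2 * x)| ^ (-α))

/-- `t_c(ε)`, the `ε`-mixing time of the continuous-time chain. -/
noncomputable def contMix {Ω : Type*} [Fintype Ω] [DecidableEq Ω] (P : Matrix Ω Ω ℝ)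
    (pi : Ω → ℝ) (ε : ℝ) : ℝ :=
  sInf {t : ℝ | 0 ≤ t ∧ contDistMax P pi t ≤ ε}

/-- `t_L(ε)`, the `ε`-mixing time of the lazy chain. -/
noncomputable def lazyMix {Ω : Type*} [Fintype Ω] [DecidableEq Ω] (P : Matrix Ω Ω ℝ)
    (pi : Ω → ℝ) (ε : ℝ) : ℕ :=
  sInf {t : ℕ | lazyDistMax P pi t ≤ ε}

/-- `t_ave(ε)`, the `ε`-mixing time of the averaged chain. -/
noncomputable def aveMix {Ω : Type*} [Fintype Ω] [DecidableEq Ω] (P : Matrix Ω Ω ℝ)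
    (pi : Ω → ℝ) (ε : ℝ) : ℕ :=
  sInf {t : ℕ | aveDistMax P pi t ≤ ε}

/-!
At each step the lazy chain jumps with probability `1/2`. Taking one of its `N + 1` steps to be the
averaging, its law at time `N + 1` is that of the averaged chain at the random time
`ξ ∼ Bin(N, 1/2)`. Total variation distance is convex, and the averaged distance is nonincreasing in
time and at most `1`, hence `d_L(N + 1, μ) ≤ d_ave(t, μ) + ℙ(ξ < t)`. A Chernoff bound, based on
`cosh x ≤ exp (x² / 2)`, controls the binomial tail.
-/

section TotalVariation

variable {Ω : Type*} [Fintype Ω] {μ ν : Ω → ℝ} {P : Matrix Ω Ω ℝ}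

lemma tvDist_nonneg (μ ν : Ω → ℝ) : 0 ≤ tvDist μ ν := by
  unfold tvDist
  positivity

lemma tvDist_le_one (hμ : IsProbVec μ) (hν : IsProbVec ν) : tvDist μ ν ≤ 1 := by
  have sum_abs_le : ∑ x, |μ x - ν x| ≤ ∑ x, (μ x + ν x) := by
    gcongr with x
    exact abs_sub_le_iff.2 ⟨by linarith [hν.1 x], by linarith [hμ.1 x]⟩
  rw [Finset.sum_add_distrib, hμ.2, hν.2] at sum_abs_le
  unfold tvDist
  linarith

lemma convexOn_tvDist (ν : Ω → ℝ) : ConvexOn ℝ Set.univ fun μ ↦ tvDist μ ν := by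
  refine ⟨convex_univ, fun μ₁ _ μ₂ _ a b ha hb hab ↦ ?_⟩
  have pointwise (x : Ω) :
      |(a • μ₁ + b • μ₂) x - ν x| ≤ a * |μ₁ x - ν x| + b * |μ₂ x - ν x| := by
    simpa only [Real.dist_eq, smul_eq_mul, Pi.add_apply, Pi.smul_apply] using
      (convexOn_univ_dist (ν x)).2 (Set.mem_univ (μ₁ x)) (Set.mem_univ (μ₂ x)) ha hb hab
  calc tvDist (a • μ₁ + b • μ₂) ν
      ≤ (∑ x, (a * |μ₁ x - ν x| + b * |μ₂ x - ν x|)) / 2 := by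
        unfold tvDist
        gcongr with x
        exact pointwise x
    _ = a • tvDist μ₁ ν + b • tvDist μ₂ ν := by
        simp only [tvDist, Finset.sum_add_distrib, ← Finset.mul_sum, smul_eq_mul]
        ring

lemma tvDist_vecMul_le (hP : IsStochastic P) (μ ν : Ω → ℝ) :
    tvDist (μ ᵥ* P) (ν ᵥ* P) ≤ tvDist μ ν := by
  unfold tvDist
  gcongr ?_ / 2
  calc ∑ y, |(μ ᵥ* P) y - (ν ᵥ* P) y|
      = ∑ y, |∑ x, (μ x - ν x) * P x y| := by
        simp only [vecMul, dotProduct, sub_mul, Finset.sum_sub_distrib]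
    _ ≤ ∑ y, ∑ x, |μ x - ν x| * P x y := by
        gcongr with y
        refine (Finset.abs_sum_le_sum_abs _ _).trans_eq (Finset.sum_congr rfl fun x _ ↦ ?_)
        rw [abs_mul, abs_of_nonneg (hP.1 x y)]
    _ = ∑ x, |μ x - ν x| := by
        rw [Finset.sum_comm]
        simp only [← Finset.mul_sum, hP.2, mul_one]

end TotalVariation

section Stochastic

variable {Ω : Type*} [Fintype Ω] {μ pi : Ω → ℝ} {P : Matrix Ω Ω ℝ}

lemma isStochastic_iff_mem_rowStochastic [DecidableEq Ω] : IsStochastic P ↔ P ∈ rowStochastic ℝ Ω :=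
  mem_rowStochastic_iff_sum.symm

lemma IsStochastic.mul {Q : Matrix Ω Ω ℝ} (hP : IsStochastic P) (hQ : IsStochastic Q) :
    IsStochastic (P * Q) := by
  classical
  rw [isStochastic_iff_mem_rowStochastic] at *
  exact mul_mem hP hQ

lemma IsProbVec.vecMul (hμ : IsProbVec μ) (hP : IsStochastic P) : IsProbVec (μ ᵥ* P) := by
  classical
  rw [isStochastic_iff_mem_rowStochastic] at hP
  refine ⟨nonneg_vecMul_of_mem_rowStochastic hP hμ.1, ?_⟩
  rw [← dotProduct_one]
  exact vecMul_dotProduct_one_eq_one_rowStochastic hP ((dotProduct_one μ).trans hμ.2)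

variable [DecidableEq Ω]

lemma IsStochastic.pow (hP : IsStochastic P) (k : ℕ) : IsStochastic (P ^ k) := by
  rw [isStochastic_iff_mem_rowStochastic] at *
  exact pow_mem hP k

lemma IsStochastic.lazyM (hP : IsStochastic P) : IsStochastic (lazyM P) := by
  rw [isStochastic_iff_mem_rowStochastic] at *
  rw [_root_.lazyM, smul_add]
  exact convex_rowStochastic (one_mem _) hP (by norm_num) (by norm_num) (by norm_num)

lemma aveDist_natCast (P : Matrix Ω Ω ℝ) (pi : Ω → ℝ) (k : ℕ) (μ : Ω → ℝ) :
    aveDist P pi k μ = tvDist (μ ᵥ* (lazyM P * P ^ k)) pi := by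
  unfold aveDist
  congr 1
  ext y
  simp only [Nat.floor_natCast, lazyM, smul_mul_assoc, add_mul, one_mul, pow_succ', vecMul_smul,
    vecMul_add, Pi.smul_apply, Pi.add_apply, smul_eq_mul]
  ring

lemma aveDist_le_one (hP : IsStochastic P) (hpi : IsProbVec pi) (hμ : IsProbVec μ) (k : ℕ) :
    aveDist P pi k μ ≤ 1 := by
  rw [aveDist_natCast]
  exact tvDist_le_one (hμ.vecMul (hP.lazyM.mul (hP.pow k))) hpi

lemma antitone_aveDist (hP : IsStochastic P) (hstat : pi ᵥ* P = pi) (μ : Ω → ℝ) :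
    Antitone fun k : ℕ ↦ aveDist P pi k μ := by
  refine antitone_nat_of_succ_le fun k ↦ ?_
  calc aveDist P pi (k + 1 : ℕ) μ
      = tvDist ((μ ᵥ* (lazyM P * P ^ k)) ᵥ* P) (pi ᵥ* P) := by
        rw [aveDist_natCast, pow_succ, ← mul_assoc, vecMul_vecMul, hstat]
    _ ≤ tvDist (μ ᵥ* (lazyM P * P ^ k)) pi := tvDist_vecMul_le hP _ _
    _ = aveDist P pi k μ := (aveDist_natCast P pi k μ).symm

end Stochastic

/-- The mass at `k` of the binomial law `Bin(N, 1/2)`, which is the law of the number of jumps of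
the lazy chain in `N` steps. -/
noncomputable def symmBinomial (N k : ℕ) : ℝ :=
  N.choose k / 2 ^ N

lemma symmBinomial_nonneg (N k : ℕ) : 0 ≤ symmBinomial N k := by
  unfold symmBinomial
  positivity

lemma sum_symmBinomial (N : ℕ) : ∑ k ∈ Finset.range (N + 1), symmBinomial N k = 1 := by
  unfold symmBinomial
  rw [← Finset.sum_div, div_eq_one_iff_eq (by positivity)]
  exact_mod_cast Nat.sum_range_choose N

lemma sum_symmBinomial_mul_exp (N : ℕ) (l : ℝ) :
    ∑ k ∈ Finset.range (N + 1), symmBinomial N k * Real.exp (l * (N - 2 * k)) =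
      Real.cosh l ^ N := by
  rw [Real.cosh_eq, div_pow, add_comm (Real.exp l), add_pow, Finset.sum_div]
  refine Finset.sum_congr rfl fun k hk ↦ ?_
  have hkN : k ≤ N := Finset.mem_range_succ_iff.1 hk
  have exp_eq : Real.exp (l * (N - 2 * k)) = Real.exp (-l) ^ k * Real.exp l ^ (N - k) := by
    rw [← Real.exp_nat_mul, ← Real.exp_nat_mul, ← Real.exp_add, Nat.cast_sub hkN]
    ring_nf
  rw [exp_eq, symmBinomial]
  ring

lemma sum_symmBinomial_lower_tail_le (N : ℕ) {l : ℝ} (hl : 0 ≤ l) (t : ℕ) :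
    ∑ k ∈ Finset.range (N + 1) with k < t, symmBinomial N k ≤
      Real.exp (N * (l ^ 2 / 2) - l * (N + 1 - 2 * t)) := by
  have exp_mul_tail_le : Real.exp (l * (N + 1 - 2 * t)) *
      ∑ k ∈ Finset.range (N + 1) with k < t, symmBinomial N k ≤ Real.exp (N * (l ^ 2 / 2)) := by
    calc Real.exp (l * (N + 1 - 2 * t)) *
          ∑ k ∈ Finset.range (N + 1) with k < t, symmBinomial N k
        ≤ ∑ k ∈ Finset.range (N + 1) with k < t,
            symmBinomial N k * Real.exp (l * (N - 2 * k)) := by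
          rw [Finset.mul_sum]
          refine Finset.sum_le_sum fun k hk ↦ ?_
          have hkt : (k : ℝ) + 1 ≤ t := by exact_mod_cast (Finset.mem_filter.1 hk).2
          rw [mul_comm]
          refine mul_le_mul_of_nonneg_left (Real.exp_le_exp.2 ?_) (symmBinomial_nonneg N k)
          exact mul_le_mul_of_nonneg_left (by linarith) hl
      _ ≤ ∑ k ∈ Finset.range (N + 1), symmBinomial N k * Real.exp (l * (N - 2 * k)) :=
          Finset.sum_le_sum_of_subset_of_nonneg (Finset.filter_subset _ _) fun k _ _ ↦
            mul_nonneg (symmBinomial_nonneg N k) (Real.exp_nonneg _)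
      _ = Real.cosh l ^ N := sum_symmBinomial_mul_exp N l
      _ ≤ Real.exp (l ^ 2 / 2) ^ N :=
          pow_le_pow_left₀ (Real.cosh_pos l).le (Real.cosh_le_exp_half_sq l) N
      _ = Real.exp (N * (l ^ 2 / 2)) := (Real.exp_nat_mul _ N).symm
  rw [Real.exp_sub, le_div_iff₀' (Real.exp_pos _)]
  exact exp_mul_tail_le

lemma sum_mul_le_add_sum_filter_lt {ι : Type*} [LinearOrder ι] {s : Finset ι} {w a : ι → ℝ}
    (hw : ∀ i ∈ s, 0 ≤ w i) (hsum : ∑ i ∈ s, w i = 1) (ha : Antitone a) (ha_one : ∀ i, a i ≤ 1)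
    {t : ι} (hat : 0 ≤ a t) : ∑ i ∈ s, w i * a i ≤ a t + ∑ i ∈ s with i < t, w i := by
  calc ∑ i ∈ s, w i * a i
      ≤ ∑ i ∈ s, (w i * a t + if i < t then w i else 0) := by
        refine Finset.sum_le_sum fun i hi ↦ ?_
        split_ifs with hit
        · exact (mul_le_of_le_one_right (hw i hi) (ha_one i)).trans
            (le_add_of_nonneg_left (mul_nonneg (hw i hi) hat))
        · rw [add_zero]
          exact mul_le_mul_of_nonneg_left (ha (not_lt.1 hit)) (hw i hi)
    _ = a t + ∑ i ∈ s with i < t, w i := by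
        rw [Finset.sum_add_distrib, ← Finset.sum_mul, hsum, one_mul, Finset.sum_filter]

section Comparison

variable {Ω : Type*} [Fintype Ω] [DecidableEq Ω] {μ pi : Ω → ℝ} {P : Matrix Ω Ω ℝ}

lemma lazyM_pow (P : Matrix Ω Ω ℝ) (N : ℕ) :
    lazyM P ^ N = ∑ k ∈ Finset.range (N + 1), symmBinomial N k • P ^ k := by
  rw [lazyM, smul_pow, add_comm, (Commute.one_right P).add_pow, Finset.smul_sum]
  refine Finset.sum_congr rfl fun k _ ↦ ?_
  rw [one_pow, mul_one, ← nsmul_eq_mul', ← Nat.cast_smul_eq_nsmul ℝ, smul_smul, symmBinomial,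
    inv_pow, div_eq_inv_mul]

lemma lazyDist_succ_le_sum (P : Matrix Ω Ω ℝ) (pi : Ω → ℝ) (N : ℕ) (μ : Ω → ℝ) :
    lazyDist P pi (N + 1 : ℕ) μ ≤
      ∑ k ∈ Finset.range (N + 1), symmBinomial N k * aveDist P pi k μ := by
  have law_eq : μ ᵥ* lazyM P ^ (N + 1) =
      ∑ k ∈ Finset.range (N + 1), symmBinomial N k • (μ ᵥ* (lazyM P * P ^ k)) := by
    simp only [pow_succ' (lazyM P), lazyM_pow, Finset.mul_sum, mul_smul_comm, vecMul_sum,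
      vecMul_smul]
  rw [lazyDist, Nat.floor_natCast, law_eq]
  simpa only [aveDist_natCast, smul_eq_mul] using
    (convexOn_tvDist pi).map_sum_le (fun k _ ↦ symmBinomial_nonneg N k) (sum_symmBinomial N)
      fun _ _ ↦ Set.mem_univ _

lemma lazyDist_succ_le_aveDist_add_exp (hP : IsStochastic P) (hpi : IsProbVec pi)
    (hstat : pi ᵥ* P = pi) (hμ : IsProbVec μ) {N t : ℕ} (ht : 2 * t ≤ N + 1) :
    lazyDist P pi (N + 1 : ℕ) μ ≤
      aveDist P pi t μ + Real.exp (-(N + 1 - 2 * t) ^ 2 / (2 * (N + 1))) := by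
  -- Up to replacing `N` by `N + 1`, this is the minimizer of the exponent in the Chernoff bound.
  let l : ℝ := (N + 1 - 2 * t) / (N + 1)
  have hl : 0 ≤ l := div_nonneg (sub_nonneg.2 (by exact_mod_cast ht)) (by positivity)
  have exponent_le : (N : ℝ) * (l ^ 2 / 2) - l * (N + 1 - 2 * t) ≤
      -(N + 1 - 2 * t : ℝ) ^ 2 / (2 * (N + 1)) := by
    calc (N : ℝ) * (l ^ 2 / 2) - l * (N + 1 - 2 * t)
        ≤ (N + 1) * (l ^ 2 / 2) - l * (N + 1 - 2 * t) := by
          gcongr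
          exact le_add_of_nonneg_right zero_le_one
      _ = -(N + 1 - 2 * t : ℝ) ^ 2 / (2 * (N + 1)) := by
          simp only [l]
          field_simp
          ring
  calc lazyDist P pi (N + 1 : ℕ) μ
      ≤ ∑ k ∈ Finset.range (N + 1), symmBinomial N k * aveDist P pi k μ :=
        lazyDist_succ_le_sum P pi N μ
    _ ≤ aveDist P pi t μ + ∑ k ∈ Finset.range (N + 1) with k < t, symmBinomial N k :=
        sum_mul_le_add_sum_filter_lt (fun k _ ↦ symmBinomial_nonneg N k) (sum_symmBinomial N)
          (antitone_aveDist hP hstat μ) (aveDist_le_one hP hpi hμ) (tvDist_nonneg _ _)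
    _ ≤ aveDist P pi t μ + Real.exp (-(N + 1 - 2 * t) ^ 2 / (2 * (N + 1))) := by
        gcongr
        exact (sum_symmBinomial_lower_tail_le N hl t).trans
          (Real.exp_le_exp.2 exponent_le)

lemma sq_div_four_le_sq_div {s r c : ℝ} (hs : 0 < s) (hsr : s ≤ 3 * r) (hc : 2 * s * r ≤ c) :
    s ^ 2 / 4 ≤ c ^ 2 / (2 * (2 * r ^ 2 + c)) := by
  have hr : 0 < r := by linarith
  have hc_pos : 0 < c := lt_of_lt_of_le (by positivity) hc
  have factor_nonneg : 0 ≤ 2 * c + 4 * s * r - s ^ 2 := by nlinarith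
  rw [div_le_div_iff₀ (by norm_num) (by positivity), ← sub_nonneg]
  calc 0 ≤ 2 * ((c - 2 * s * r) * (2 * c + 4 * s * r - s ^ 2) +
            2 * s ^ 2 * r * (3 * r - s)) := by
        have := sub_nonneg.2 hc
        have := sub_nonneg.2 hsr
        positivity
    _ = c ^ 2 * 4 - s ^ 2 * (2 * (2 * r ^ 2 + c)) := by ring

theorem lazy_dist_le_ave_dist_general (hP : IsStochastic P) (hpi : IsProbVec pi)
    (hstat : pi ᵥ* P = pi) {t : ℕ} {s : ℝ} (hs : 0 < s) (hst : s ≤ 3 * √t) (hμ : IsProbVec μ) :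
    lazyDist P pi (2 * t + ⌈2 * s * √t⌉) μ ≤ aveDist P pi t μ + Real.exp (-s ^ 2 / 4) := by
  have hpos : 0 < 2 * s * √t := mul_pos (by positivity) (by linarith)
  obtain ⟨m, hm⟩ := Nat.exists_eq_add_one.2 (Nat.ceil_pos.2 hpos)
  have time_eq : 2 * (t : ℝ) + ⌈2 * s * √t⌉ = (2 * t + m + 1 : ℕ) := by
    rw [← natCast_ceil_eq_intCast_ceil hpos.le, hm]
    push_cast
    ring
  have le_ceil : 2 * s * √t ≤ m + 1 := by exact_mod_cast hm ▸ Nat.le_ceil (2 * s * √t)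
  have exponent_le := sq_div_four_le_sq_div hs hst le_ceil
  rw [Real.sq_sqrt t.cast_nonneg] at exponent_le
  rw [time_eq]
  refine (lazyDist_succ_le_aveDist_add_exp (t := t) hP hpi hstat hμ (by omega)).trans ?_
  have excess_eq : ((2 * t + m : ℕ) : ℝ) + 1 - 2 * t = m + 1 := by push_cast; ring
  have steps_eq : ((2 * t + m : ℕ) : ℝ) + 1 = 2 * t + (m + 1) := by push_cast; ring
  rw [excess_eq, steps_eq, neg_div, neg_div]
  gcongr

end Comparison

/-- **Proposition 1.8 (eq. (10), second line) of Hermon–Peres.**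
For every finite irreducible Markov chain (no reversibility needed), every `t ∈ ℕ`,
every `0 < s ≤ √t` and every initial distribution `μ`,
`d_L(2t + ⌈2s√t⌉, μ) ≤ d_ave(t, μ) + e^{-s²/4}`. -/
theorem lazy_dist_le_ave_dist :
    ∀ (Ω : Type) [Fintype Ω] [DecidableEq Ω]
      (P : Matrix Ω Ω ℝ) (pi : Ω → ℝ), IsMC P pi →
      ∀ (t : ℕ) (s : ℝ), 0 < s → s ≤ Real.sqrt t →
      ∀ μ : Ω → ℝ, IsProbVec μ →
        lazyDist P pi (2 * (t : ℝ) + ((⌈2 * s * Real.sqrt t⌉ : ℤ) : ℝ)) μ ≤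
          aveDist P pi (t : ℝ) μ + Real.exp (-s ^ 2 / 4) := by
  intro Ω _ _ P pi ⟨hP, _, hpi, hstat⟩ t s hs hst μ hμ
  exact lazy_dist_le_ave_dist_general hP hpi hstat hs (by linarith) hμ
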